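/- arXiv:2008.02455 — 3 statements merged into one kernel-verified Lean document; each statement's English description precedes it below -/
import Mathlib

section
/- For the IMH chain on the finite state space X = {1, …, m}, the t-step distribution started from state 1 satisfies, for every t ≥ 1, P^t(1, ·) = (1 − 1/w₁)^t · δ₁ + (1 − (1 − 1/w₁)^t) · π, where δ₁ is the point mass at state 1; consequently ‖P^t(1,·) − π‖_TV = (1 − π₁)·(1 − 1/w₁)^t. -/
/-- The IMH transition matrix on a finite state space, for target pmf `tgt` and proposal
pmf `prp`: `P(i,j) = p_j·min(1, w_j/w_i)` for `j ≠ i` and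
`P(i,i) = p_i + Σ_k p_k·max(0, 1 − w_k/w_i)`, where `w_i = π_i/p_i`. -/
noncomputable def imhMatrix {n : ℕ} (tgt prp : Fin n → ℝ) : Matrix (Fin n) (Fin n) ℝ :=
  Matrix.of fun i j =>
    if j = i then prp i + ∑ k, prp k * max 0 (1 - (tgt k / prp k) / (tgt i / prp i))
    else prp j * min 1 ((tgt j / prp j) / (tgt i / prp i))

/-- Total variation distance between two pmfs on a finite state space. -/
noncomputable def tvFin {n : ℕ} (μ ν : Fin n → ℝ) : ℝ := (1 / 2) * ∑ j, |μ j - ν j|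

theorem imh_apply {n : ℕ} (tgt prp : Fin n → ℝ) (ht : ∀ i, 0 < tgt i) (hp : ∀ i, 0 < prp i)
    (i j : Fin n) : imhMatrix tgt prp i j =
      prp j * min 1 ((tgt j / prp j) / (tgt i / prp i)) +
      (if j = i then ∑ k, prp k * max 0 (1 - (tgt k / prp k) / (tgt i / prp i)) else 0) := by
  unfold imhMatrix
  rw [Matrix.of_apply]
  split_ifs with h
  · subst h
    rw [div_self (div_pos (ht j) (hp j)).ne']
    simp
  · simp

theorem imh_row {n : ℕ} (tgt prp : Fin n → ℝ) (ht : ∀ i, 0 < tgt i) (hp : ∀ i, 0 < prp i)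
    (hs : ∑ i, prp i = 1) (i : Fin n) : ∑ j, imhMatrix tgt prp i j = 1 := by
  simp_rw [imh_apply tgt prp ht hp]
  rw [Finset.sum_add_distrib, Finset.sum_ite_eq' Finset.univ i, if_pos (Finset.mem_univ _),
    ← Finset.sum_add_distrib]
  refine Eq.trans (Finset.sum_congr rfl fun k _ => ?_) hs
  rcases le_total 1 ((tgt k / prp k) / (tgt i / prp i)) with h | h
  · rw [min_eq_left h, max_eq_left (by linarith)]; ring
  · rw [min_eq_right h, max_eq_right (by linarith)]; ring

theorem imh_rev {n : ℕ} (tgt prp : Fin n → ℝ) (ht : ∀ i, 0 < tgt i) (hp : ∀ i, 0 < prp i)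
    (i j : Fin n) : tgt i * imhMatrix tgt prp i j = tgt j * imhMatrix tgt prp j i := by
  have key : ∀ a b : Fin n, tgt a * (prp b * min 1 ((tgt b / prp b) / (tgt a / prp a))) =
      min (tgt a * prp b) (tgt b * prp a) := by
    intro a b
    have h1 := ht a
    have h2 := hp a
    have h3 := hp b
    rw [← mul_assoc, mul_min_of_nonneg _ _ (mul_pos h1 h3).le, mul_one]
    congr 1
    field_simp
  by_cases h : j = i
  · rw [h]
  · rw [imh_apply tgt prp ht hp, imh_apply tgt prp ht hp, if_neg h, if_neg (Ne.symm h),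
      add_zero, add_zero, key, key, min_comm]

theorem imh_stat {n : ℕ} (tgt prp : Fin n → ℝ) (ht : ∀ i, 0 < tgt i) (hp : ∀ i, 0 < prp i)
    (hs : ∑ i, prp i = 1) (j : Fin n) : ∑ i, tgt i * imhMatrix tgt prp i j = tgt j := by
  simp_rw [fun i => imh_rev tgt prp ht hp i j]
  rw [← Finset.mul_sum, imh_row tgt prp ht hp hs, mul_one]

/-- for the IMH chain on `{1, …, m}` (here `Fin (m+2)`, state `1` being
index `0`), `Pᵗ(1,·) = (1 − 1/w₁)ᵗ·δ₁ + (1 − (1 − 1/w₁)ᵗ)·π`, and consequently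
`‖Pᵗ(1,·) − π‖_TV = (1 − π₁)(1 − 1/w₁)ᵗ`, for every `t ≥ 1`. -/
theorem imh_finite_start_at_max (m : ℕ) (tgt prp : Fin (m + 2) → ℝ)
    (htgt_pos : ∀ i, 0 < tgt i) (hprp_pos : ∀ i, 0 < prp i)
    (htgt_sum : ∑ i, tgt i = 1) (hprp_sum : ∑ i, prp i = 1)
    (hmono : ∀ i j : Fin (m + 2), i ≤ j → tgt j / prp j ≤ tgt i / prp i) :
    ∀ t : ℕ, 1 ≤ t →
      ((imhMatrix tgt prp ^ t) 0 = fun j =>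
          (1 - 1 / (tgt 0 / prp 0)) ^ t * (if j = 0 then 1 else 0)
            + (1 - (1 - 1 / (tgt 0 / prp 0)) ^ t) * tgt j)
        ∧ tvFin ((imhMatrix tgt prp ^ t) 0) tgt =
            (1 - tgt 0) * (1 - 1 / (tgt 0 / prp 0)) ^ t := by
  have hw : 0 < tgt 0 / prp 0 := div_pos (htgt_pos 0) (hprp_pos 0)
  have hr : ∀ k, (tgt k / prp k) / (tgt 0 / prp 0) ≤ 1 := fun k =>
    (div_le_one hw).2 (hmono 0 k (Fin.zero_le k))
  have hpr : ∀ k, prp k * ((tgt k / prp k) / (tgt 0 / prp 0)) = 1 / (tgt 0 / prp 0) * tgt k := by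
    intro k
    have := (hprp_pos k).ne'
    field_simp
  have hrow : ∀ j, imhMatrix tgt prp 0 j =
      (1 - 1 / (tgt 0 / prp 0)) * (if j = 0 then 1 else 0) + 1 / (tgt 0 / prp 0) * tgt j := by
    intro j
    rw [imh_apply tgt prp htgt_pos hprp_pos, min_eq_right (hr j), hpr]
    have : ∑ k, prp k * max 0 (1 - (tgt k / prp k) / (tgt 0 / prp 0)) =
        1 - 1 / (tgt 0 / prp 0) := by
      have : ∀ k, prp k * max 0 (1 - (tgt k / prp k) / (tgt 0 / prp 0)) =
          prp k - 1 / (tgt 0 / prp 0) * tgt k := by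
        intro k
        rw [max_eq_right (by linarith [hr k]), mul_sub, hpr, mul_one]
      simp_rw [this]
      rw [Finset.sum_sub_distrib, ← Finset.mul_sum, hprp_sum, htgt_sum, mul_one]
    rw [this]
    split_ifs <;> ring
  have ha : 0 ≤ 1 - 1 / (tgt 0 / prp 0) := by
    have h : ∑ k, prp k * ((tgt k / prp k) / (tgt 0 / prp 0)) ≤ ∑ k, prp k :=
      Finset.sum_le_sum fun k _ => mul_le_of_le_one_right (hprp_pos k).le (hr k)
    simp_rw [hpr] at h
    rw [← Finset.mul_sum, htgt_sum, hprp_sum] at h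
    linarith
  generalize hc : 1 / (tgt 0 / prp 0) = c at *
  have main : ∀ t : ℕ, ∀ j, (imhMatrix tgt prp ^ t) 0 j =
      (1 - c) ^ t * (if j = 0 then 1 else 0) + (1 - (1 - c) ^ t) * tgt j := by
    intro t
    induction t with
    | zero => intro j; simp [Matrix.one_apply, eq_comm]
    | succ t ih =>
      intro j
      rw [pow_succ, Matrix.mul_apply]
      simp_rw [ih, add_mul, mul_assoc]
      rw [Finset.sum_add_distrib, ← Finset.mul_sum, ← Finset.mul_sum,
        imh_stat tgt prp htgt_pos hprp_pos hprp_sum]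
      simp_rw [ite_mul, one_mul, zero_mul]
      rw [Finset.sum_ite_eq' Finset.univ 0, if_pos (Finset.mem_univ _), hrow]
      ring
  intro t _
  refine ⟨funext (main t), ?_⟩
  unfold tvFin
  have h0 : tgt 0 ≤ 1 := htgt_sum ▸
    Finset.single_le_sum (fun i _ => (htgt_pos i).le) (Finset.mem_univ 0)
  have habs : ∀ j, |(imhMatrix tgt prp ^ t) 0 j - tgt j| =
      (1 - c) ^ t * (tgt j + (if j = 0 then 1 - 2 * tgt 0 else 0)) := by
    intro j
    rw [main, show ∀ x : ℝ, (1 - c) ^ t * x + (1 - (1 - c) ^ t) * tgt j - tgt j =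
      (1 - c) ^ t * (x - tgt j) from fun x => by ring, abs_mul, abs_of_nonneg (pow_nonneg ha t)]
    congr 1
    split_ifs with h
    · subst h
      rw [abs_of_nonneg (by linarith)]; ring
    · rw [zero_sub, abs_neg, abs_of_pos (htgt_pos j), add_zero]
  simp_rw [habs]
  rw [← Finset.mul_sum, Finset.sum_add_distrib, Finset.sum_ite_eq' Finset.univ 0,
    if_pos (Finset.mem_univ _), htgt_sum]
  ring
end

section
/- For the IMH chain on the finite state space X = {1, …, m}, assume additionally that w₁ > 1 (equivalently π ≠ p). Then there exists a constant c > 0, depending only on π and p, such that for every state i and every t ≥ 1, ‖P^t(i,·) − π‖_TV ≥ c·(1 − 1/w₁)^t. -/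
theorem imh_row_sum {n : ℕ} (tgt prp : Fin n → ℝ)
    (htgt_pos : ∀ i, 0 < tgt i) (hprp_pos : ∀ i, 0 < prp i)
    (hprp_sum : ∑ i, prp i = 1) (i : Fin n) : ∑ j, imhMatrix tgt prp i j = 1 := by
  have hwi : 0 < tgt i / prp i := div_pos (htgt_pos i) (hprp_pos i)
  have h : ∀ j, imhMatrix tgt prp i j =
      prp j - prp j * max 0 (1 - (tgt j / prp j) / (tgt i / prp i)) +
      (if j = i then ∑ k, prp k * max 0 (1 - (tgt k / prp k) / (tgt i / prp i)) else 0) := by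
    intro j
    unfold imhMatrix
    rw [Matrix.of_apply]
    by_cases hj : j = i
    · subst hj
      rw [if_pos rfl, if_pos rfl, div_self hwi.ne']
      simp
    · rw [if_neg hj, if_neg hj]
      rcases le_total ((tgt j / prp j) / (tgt i / prp i)) 1 with h1 | h1
      · rw [min_eq_right h1, max_eq_right (by linarith)]; ring
      · rw [min_eq_left h1, max_eq_left (by linarith)]; ring
  rw [Finset.sum_congr rfl (fun j _ => h j), Finset.sum_add_distrib, Finset.sum_sub_distrib,
    Finset.sum_ite_eq' Finset.univ i, hprp_sum]
  simp

/-- for the IMH chain on `{1, …, m}` (here `Fin (m+2)`, state `1` being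
index `0`) with `w₁ > 1`, there is a constant `c > 0` (depending only on `π` and `p`) such
that `‖Pᵗ(i,·) − π‖_TV ≥ c·(1 − 1/w₁)ᵗ` for every state `i` and every `t ≥ 1`. -/
theorem imh_finite_uniform_lower_bound (m : ℕ) (tgt prp : Fin (m + 2) → ℝ)
    (htgt_pos : ∀ i, 0 < tgt i) (hprp_pos : ∀ i, 0 < prp i)
    (htgt_sum : ∑ i, tgt i = 1) (hprp_sum : ∑ i, prp i = 1)
    (hmono : ∀ i j : Fin (m + 2), i ≤ j → tgt j / prp j ≤ tgt i / prp i)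
    (hw : 1 < tgt 0 / prp 0) :
    ∃ c : ℝ, 0 < c ∧ ∀ (i : Fin (m + 2)) (t : ℕ), 1 ≤ t →
      c * (1 - 1 / (tgt 0 / prp 0)) ^ t ≤ tvFin ((imhMatrix tgt prp ^ t) i) tgt := by
  have hw0 : 0 < tgt 0 / prp 0 := by linarith
  have hcol : ∀ j, imhMatrix tgt prp j 0 =
      prp 0 + (1 - 1 / (tgt 0 / prp 0)) * (if j = 0 then 1 else 0) := by
    intro j
    unfold imhMatrix
    rw [Matrix.of_apply]
    by_cases hj : j = 0
    · subst hj
      have e : ∀ k, prp k * max 0 (1 - (tgt k / prp k) / (tgt 0 / prp 0)) =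
          prp k - tgt k * (1 / (tgt 0 / prp 0)) := by
        intro k
        have h1 : (tgt k / prp k) / (tgt 0 / prp 0) ≤ 1 :=
          (div_le_one hw0).2 (hmono 0 k (Fin.zero_le k))
        rw [max_eq_right (by linarith), mul_sub, ← mul_div_assoc,
          mul_div_cancel₀ _ (hprp_pos k).ne']
        ring
      rw [if_pos rfl, if_pos rfl, Finset.sum_congr rfl (fun k _ => e k),
        Finset.sum_sub_distrib, ← Finset.sum_mul, hprp_sum, htgt_sum]
      ring
    · have h1 : 1 ≤ (tgt 0 / prp 0) / (tgt j / prp j) :=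
        (one_le_div (div_pos (htgt_pos j) (hprp_pos j))).2 (hmono 0 j (Fin.zero_le j))
      rw [if_neg (Ne.symm hj), if_neg hj, min_eq_left h1]
      ring
  have hrow := imh_row_sum tgt prp htgt_pos hprp_pos hprp_sum
  have hlam : (1 / (tgt 0 / prp 0)) * tgt 0 = prp 0 := by
    have := (htgt_pos 0).ne'
    have := (hprp_pos 0).ne'
    field_simp
  have key : ∀ (t : ℕ) (i : Fin (m + 2)), (imhMatrix tgt prp ^ t) i 0 - tgt 0 =
      (1 - 1 / (tgt 0 / prp 0)) ^ t * ((if i = 0 then 1 else 0) - tgt 0) := by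
    intro t
    induction t with
    | zero => intro i; simp [Matrix.one_apply]
    | succ t ih =>
      intro i
      have e : ∀ j, imhMatrix tgt prp i j * (imhMatrix tgt prp ^ t) j 0 =
          (1 - 1 / (tgt 0 / prp 0)) ^ t * (if j = 0 then imhMatrix tgt prp i j else 0) +
          imhMatrix tgt prp i j * (tgt 0 - (1 - 1 / (tgt 0 / prp 0)) ^ t * tgt 0) := by
        intro j
        rw [eq_add_of_sub_eq (ih j)]
        split_ifs <;> ring
      rw [pow_succ', Matrix.mul_apply, Finset.sum_congr rfl (fun j _ => e j),
        Finset.sum_add_distrib, ← Finset.mul_sum, ← Finset.sum_mul, hrow,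
        Finset.sum_ite_eq' Finset.univ 0, if_pos (Finset.mem_univ _), hcol, pow_succ]
      linear_combination (-(1 - 1 / (tgt 0 / prp 0)) ^ t) * hlam
  have hlt : tgt 0 < 1 := by
    rw [← htgt_sum, Fin.sum_univ_succ]
    have : 0 < ∑ i : Fin (m + 1), tgt i.succ :=
      Finset.sum_pos (fun i _ => htgt_pos _) Finset.univ_nonempty
    linarith
  have hl0 : 0 ≤ 1 - 1 / (tgt 0 / prp 0) := by
    have := (div_le_one hw0).2 hw.le
    linarith
  refine ⟨1 / 2 * min (tgt 0) (1 - tgt 0), ?_, ?_⟩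
  · have := lt_min (htgt_pos 0) (sub_pos.2 hlt)
    linarith
  · intro i t _
    have h1 : |(imhMatrix tgt prp ^ t) i 0 - tgt 0| ≤
        ∑ j, |(imhMatrix tgt prp ^ t) i j - tgt j| :=
      Finset.single_le_sum (f := fun j => |(imhMatrix tgt prp ^ t) i j - tgt j|)
        (fun j _ => abs_nonneg _) (Finset.mem_univ 0)
    rw [key, abs_mul, abs_of_nonneg (pow_nonneg hl0 t)] at h1
    have h2 : min (tgt 0) (1 - tgt 0) ≤ |(if i = 0 then (1 : ℝ) else 0) - tgt 0| := by
      split_ifs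
      · exact (min_le_right _ _).trans (le_abs_self _)
      · rw [zero_sub, abs_neg]
        exact (min_le_left _ _).trans (le_abs_self _)
    have h3 := mul_le_mul_of_nonneg_left h2 (pow_nonneg hl0 t)
    unfold tvFin
    linarith
end

section
/- Let P be a Markov kernel on a measurable space (X, F) in which the diagonal is measurable, with invariant probability measure π (i.e. ∫ P(x, A) π(dx) = π(A) for all A ∈ F) such that π is atomless, and let R(x) = P(x, {x}) denote the holding (rejection) probability at x. If the π-essential supremum of R equals 1, then P is not geometrically ergodic: there do not exist a constant r ∈ (0,1) and a function C : X → [0, ∞) such that ‖P^n(x,·) − π‖_TV ≤ C(x)·r^n for all n ≥ 1 and π-almost every x. -/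
open MeasureTheory

/-- Total variation distance between two measures. -/
noncomputable def tvDist {X : Type*} [MeasurableSpace X] (μ ν : Measure X) : ℝ :=
  ⨆ A : {s : Set X // MeasurableSet s}, |(μ A.1).toReal - (ν A.1).toReal|

/-- `n`-step kernel (n-fold composition) of a Markov kernel. -/
noncomputable def kiter {X : Type*} [MeasurableSpace X] (P : X → Measure X) : ℕ → X → Measure X
  | 0, x => Measure.dirac x
  | (n + 1), x => (kiter P n x).bind P

lemma kiter_prob {X : Type*} [MeasurableSpace X] (P : X → Measure X) (hPmeas : Measurable P)
    (hPprob : ∀ x, IsProbabilityMeasure (P x)) (n : ℕ) (x : X) :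
    IsProbabilityMeasure (kiter P n x) := by
  induction n with
  | zero => simp only [kiter]; infer_instance
  | succ n ih =>
    constructor
    simp only [kiter]
    rw [Measure.bind_apply MeasurableSet.univ hPmeas.aemeasurable]
    simp

lemma kiter_hold {X : Type*} [MeasurableSpace X] (P : X → Measure X) (hPmeas : Measurable P)
    (x : X) (hx : MeasurableSet ({x} : Set X)) (n : ℕ) :
    (P x {x}) ^ n ≤ kiter P n x {x} := by
  induction n with
  | zero => simp [kiter]
  | succ n ih =>
    simp only [kiter]
    rw [Measure.bind_apply hx hPmeas.aemeasurable]
    calc (P x {x}) ^ (n + 1) = P x {x} * (P x {x}) ^ n := by ring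
      _ ≤ P x {x} * kiter P n x {x} := by gcongr
      _ = ∫⁻ _ in {x}, P x {x} ∂(kiter P n x) := by simp
      _ = ∫⁻ a in {x}, P a {x} ∂(kiter P n x) := by
        apply setLIntegral_congr_fun hx
        intro a ha
        rw [Set.mem_singleton_iff.1 ha]
      _ ≤ _ := setLIntegral_le_lintegral _ _

lemma le_of_pow_le_mul_pow {a r C : ℝ} (hr : 0 < r)
    (h : ∀ n : ℕ, 1 ≤ n → a ^ n ≤ C * r ^ n) : a ≤ r := by
  by_contra! hlt
  have h1 : 1 < a / r := by rwa [one_lt_div hr]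
  obtain ⟨n, hn⟩ := pow_unbounded_of_one_lt C h1
  have h2 : C < (a / r) ^ (n + 1) := hn.trans_le (pow_le_pow_right₀ h1.le (Nat.le_succ n))
  rw [div_pow, lt_div_iff₀ (by positivity)] at h2
  exact absurd (h (n + 1) (by omega)) (not_le.2 h2)

/-- if a Markov kernel `P` (on a measurable space with measurable diagonal)
has an atomless invariant probability measure `π`, and the `π`-essential supremum of the
holding probability `R(x) = P(x, {x})` equals `1`, then `P` is not geometrically ergodic:
there are no `r ∈ (0,1)` and `C : X → [0,∞)` with `‖Pⁿ(x,·) − π‖_TV ≤ C(x)·rⁿ` for all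
`n ≥ 1` and `π`-almost every `x`. -/
theorem essSup_rejection_one_not_geometrically_ergodic
    {X : Type*} [MeasurableSpace X]
    (hdiag : MeasurableSet {q : X × X | q.1 = q.2})
    (P : X → Measure X) (hPmeas : Measurable P)
    (hPprob : ∀ x, IsProbabilityMeasure (P x))
    (πm : Measure X) (hπprob : IsProbabilityMeasure πm)
    (hinv : ∀ A : Set X, MeasurableSet A → ∫⁻ x, P x A ∂πm = πm A)
    (hatomless : ∀ x : X, πm {x} = 0)
    (hess : essSup (fun x => P x {x}) πm = 1) :
    ¬ ∃ (r : ℝ) (C : X → ℝ), 0 < r ∧ r < 1 ∧ (∀ x, 0 ≤ C x) ∧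
        ∀ᵐ x ∂πm, ∀ n : ℕ, 1 ≤ n → tvDist (kiter P n x) πm ≤ C x * r ^ n := by
  rintro ⟨r, C, hr0, hr1, -, h⟩
  have hs : ∀ x : X, MeasurableSet ({x} : Set X) := by
    intro x
    have := (measurable_prodMk_left (x := x)) hdiag
    convert this using 1
    ext y
    simp [eq_comm]
  have key : ∀ᵐ x ∂πm, P x {x} ≤ ENNReal.ofReal r := by
    filter_upwards [h] with x hx
    have := hPprob x
    rw [← ENNReal.ofReal_toReal (measure_ne_top (P x) {x})]
    apply ENNReal.ofReal_le_ofReal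
    refine le_of_pow_le_mul_pow (C := C x) hr0 fun n hn => le_trans ?_ (hx n hn)
    have hk := kiter_prob P hPmeas hPprob n x
    have h1 : (P x {x}).toReal ^ n ≤ (kiter P n x {x}).toReal := by
      rw [← ENNReal.toReal_pow]
      exact ENNReal.toReal_mono (measure_ne_top _ _) (kiter_hold P hPmeas x (hs x) n)
    have hb : BddAbove (Set.range fun A : {s : Set X // MeasurableSet s} =>
        |(kiter P n x A.1).toReal - (πm A.1).toReal|) := by
      refine ⟨1, ?_⟩
      rintro _ ⟨A, rfl⟩
      have a1 : (kiter P n x A.1).toReal ≤ 1 := measureReal_le_one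
      have a2 : (πm A.1).toReal ≤ 1 := measureReal_le_one
      have a3 : 0 ≤ (kiter P n x A.1).toReal := ENNReal.toReal_nonneg
      have a4 : 0 ≤ (πm A.1).toReal := ENNReal.toReal_nonneg
      exact abs_le.2 ⟨by linarith, by linarith⟩
    have h2 := le_ciSup hb ⟨{x}, hs x⟩
    simp only [hatomless, ENNReal.toReal_zero, sub_zero] at h2
    exact h1.trans ((le_abs_self _).trans h2)
  have h3 : essSup (fun x => P x {x}) πm ≤ ENNReal.ofReal r := essSup_le_of_ae_le _ key
  rw [hess] at h3
  exact absurd h3 (not_le.2 (by simpa using hr1))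
end
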